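/- arXiv:math/0410116 — 3 statements merged into one kernel-verified Lean document; each statement's English description precedes it below -/
import Mathlib

section
/- Let Q belong to the pinning class R_Y(P). Then the Radon–Nikodym derivative dQ/dP is P-almost everywhere equal to ξ ∘ Y, where ξ = d(Q ∘ Y⁻¹)/d(P ∘ Y⁻¹) is the Radon–Nikodym derivative of the law of Y under Q with respect to the law of Y under P; equivalently, Q is the measure with density ξ ∘ Y with respect to P. (This is the identity Q = ξ(Y)·P established in the proof of Proposition 3.) -/
open MeasureTheory ProbabilityTheory

/-- `κ` is a regular conditional distribution of the identity given `Y` under `P`: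
for every bounded measurable `F : Ω → ℝ` and every bounded measurable `g : E → ℝ`,
`∫ F·(g∘Y) dP = ∫_E g(y) (∫ F d(κ y)) dP_Y(y)`. -/
def IsCondDistribGiven {Ω E : Type*} [MeasurableSpace Ω] [MeasurableSpace E]
    (P : Measure Ω) (Y : Ω → E) (κ : Kernel E Ω) : Prop :=
  ∀ F : Ω → ℝ, Measurable F → (∃ C, ∀ ω, |F ω| ≤ C) →
  ∀ g : E → ℝ, Measurable g → (∃ C, ∀ y, |g y| ≤ C) →
    ∫ ω, F ω * g (Y ω) ∂P = ∫ y, g y * ∫ ω, F ω ∂(κ y) ∂(P.map Y)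

/-- `Q` belongs to the pinning class `R_Y(P)` (relative to the regular conditional
distribution `κP` of `P` given `Y`): `Q` is equivalent to `P` and a regular conditional
distribution of the identity given `Y` under `Q` agrees with `κP` for `P_Y`-a.e. `y`. -/
def InPinningClass {Ω E : Type*} [MeasurableSpace Ω] [MeasurableSpace E]
    (P : Measure Ω) (Y : Ω → E) (κP : Kernel E Ω) (Q : Measure Ω) : Prop :=
  Q ≪ P ∧ P ≪ Q ∧
    ∃ κQ : Kernel E Ω, IsMarkovKernel κQ ∧ IsCondDistribGiven Q Y κQ ∧
      ∀ᵐ y ∂(P.map Y), κQ y = κP y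

/-! The joint law of `(Y, id)` is the law of `Y` composed with the conditional kernel, and `P` and
`Q` share that kernel. Changing the law of `Y` by the density `ξ` therefore changes the joint law by
the density `ξ ∘ fst`, and the second marginal of this relation is `Q = ξ(Y) · P`. -/

theorem abs_indicator_one_le_one {α : Type*} (s : Set α) (x : α) :
    |s.indicator (1 : α → ℝ) x| ≤ 1 := by
  by_cases hx : x ∈ s <;> simp [hx]

section Density

open scoped ENNReal

variable {α β : Type*} [MeasurableSpace α] [MeasurableSpace β]

theorem map_withDensity_comp (μ : Measure α) {g : α → β} (hg : Measurable g)
    {f : β → ℝ≥0∞} (hf : Measurable f) :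
    (μ.withDensity (f ∘ g)).map g = (μ.map g).withDensity f := by
  ext s hs
  rw [Measure.map_apply hg hs, withDensity_apply _ (hg hs), withDensity_apply _ hs,
    setLIntegral_map hs hf hg]
  rfl

theorem compProd_withDensity_left (μ : Measure α) [SFinite μ] (κ : Kernel α β) [IsSFiniteKernel κ]
    {f : α → ℝ≥0∞} (hf : Measurable f) :
    μ.withDensity f ⊗ₘ κ = (μ ⊗ₘ κ).withDensity (f ∘ Prod.fst) := by
  ext s hs
  have hf_fst : Measurable (f ∘ Prod.fst : α × β → ℝ≥0∞) := hf.comp measurable_fst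
  calc (μ.withDensity f ⊗ₘ κ) s
      = ∫⁻ a, f a * κ a (Prod.mk a ⁻¹' s) ∂μ := by
        rw [Measure.compProd_apply hs, lintegral_withDensity_eq_lintegral_mul _ hf
          (Kernel.measurable_kernel_prodMk_left hs)]
        rfl
    _ = ∫⁻ a, ∫⁻ b, s.indicator (f ∘ Prod.fst) (a, b) ∂(κ a) ∂μ := by
        refine lintegral_congr fun a ↦ ?_
        exact (lintegral_indicator_const (measurable_prodMk_left hs) (f a)).symm
    _ = (μ ⊗ₘ κ).withDensity (f ∘ Prod.fst) s := by
        rw [withDensity_apply _ hs, ← lintegral_indicator hs,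
          Measure.lintegral_compProd (hf_fst.indicator hs)]

end Density

section CondDistrib

variable {Ω E : Type*} [MeasurableSpace Ω] [MeasurableSpace E] {P Q : Measure Ω} {Y : Ω → E}
  {κ η : Kernel E Ω}

namespace IsCondDistribGiven

theorem congr_ae (h : IsCondDistribGiven P Y κ) (hκη : ∀ᵐ y ∂(P.map Y), κ y = η y) :
    IsCondDistribGiven P Y η := by
  intro F hF hF_bdd g hg hg_bdd
  rw [h F hF hF_bdd g hg hg_bdd]
  refine integral_congr_ae ?_
  filter_upwards [hκη] with y hy
  rw [hy]

theorem map_prodMk_eq_compProd [IsFiniteMeasure P] [IsFiniteKernel κ]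
    (h : IsCondDistribGiven P Y κ) (hY : Measurable Y) :
    P.map (fun ω ↦ (Y ω, ω)) = P.map Y ⊗ₘ κ := by
  refine Measure.ext_prod fun {B A} hB hA ↦ ?_
  have hBA : MeasurableSet (B ×ˢ A) := hB.prod hA
  have hreal : (P.map fun ω ↦ (Y ω, ω)).real (B ×ˢ A) = (P.map Y ⊗ₘ κ).real (B ×ˢ A) :=
    calc (P.map fun ω ↦ (Y ω, ω)).real (B ×ˢ A)
        = ∫ ω, A.indicator 1 ω * B.indicator 1 (Y ω) ∂P := by
          rw [← integral_indicator_one hBA, integral_map (by fun_prop)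
            (measurable_one.indicator hBA).aestronglyMeasurable]
          simp only [Set.indicator_prod_one, mul_comm]
      _ = ∫ y, B.indicator 1 y * ∫ ω, A.indicator 1 ω ∂(κ y) ∂(P.map Y) :=
          h _ (measurable_one.indicator hA) ⟨1, abs_indicator_one_le_one A⟩
            _ (measurable_one.indicator hB) ⟨1, abs_indicator_one_le_one B⟩
      _ = (P.map Y ⊗ₘ κ).real (B ×ˢ A) := by
          rw [← integral_indicator_one hBA, Measure.integral_compProd
            ((integrable_const 1).indicator hBA)]
          simp only [Set.indicator_prod_one, integral_const_mul]
  exact (measureReal_eq_measureReal_iff).1 hreal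

end IsCondDistribGiven

theorem pinning_class_density_general [IsFiniteMeasure P] [IsFiniteMeasure Q] [IsFiniteKernel κ]
    (hY : Measurable Y) (hP : IsCondDistribGiven P Y κ) (hQ : IsCondDistribGiven Q Y κ)
    (hQP : Q.map Y ≪ P.map Y) :
    Q = P.withDensity ((Q.map Y).rnDeriv (P.map Y) ∘ Y) := by
  set ξ := (Q.map Y).rnDeriv (P.map Y)
  have hξ : Measurable ξ := Measure.measurable_rnDeriv _ _
  have hjoint : Q.map (fun ω ↦ (Y ω, ω)) = (P.withDensity (ξ ∘ Y)).map fun ω ↦ (Y ω, ω) :=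
    calc Q.map (fun ω ↦ (Y ω, ω))
        = Q.map Y ⊗ₘ κ := hQ.map_prodMk_eq_compProd hY
      _ = (P.map Y).withDensity ξ ⊗ₘ κ := by rw [Measure.withDensity_rnDeriv_eq _ _ hQP]
      _ = (P.map Y ⊗ₘ κ).withDensity (ξ ∘ Prod.fst) := compProd_withDensity_left _ _ hξ
      _ = (P.map fun ω ↦ (Y ω, ω)).withDensity (ξ ∘ Prod.fst) := by
          rw [hP.map_prodMk_eq_compProd hY]
      _ = (P.withDensity (ξ ∘ Y)).map fun ω ↦ (Y ω, ω) :=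
          (map_withDensity_comp P (by fun_prop) (hξ.comp measurable_fst)).symm
  simpa only [Measure.snd_map_prodMk hY, Measure.map_id'] using congrArg Measure.snd hjoint

end CondDistrib

theorem pinning_class_density {Ω E : Type*}
    [MeasurableSpace Ω] [StandardBorelSpace Ω]
    [MeasurableSpace E] [StandardBorelSpace E]
    (P : Measure Ω) [IsProbabilityMeasure P]
    (Y : Ω → E) (hY : Measurable Y)
    (κP : Kernel E Ω) [IsMarkovKernel κP]
    (hκP : IsCondDistribGiven P Y κP)
    (Q : Measure Ω) [IsProbabilityMeasure Q]
    (hQ : InPinningClass P Y κP Q) :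
    Q = P.withDensity (fun ω => (Q.map Y).rnDeriv (P.map Y) (Y ω)) := by
  obtain ⟨hQP, -, κQ, _, hκQ, hκ⟩ := hQ
  exact pinning_class_density_general hY hκP (hκQ.congr_ae ((hQP.map hY).ae_le hκ)) (hQP.map hY)
end

section
/- Suppose η is a disintegration of Y with respect to G and that G is countably generated. Let κ_P be a regular conditional distribution of the identity given Y under P. Then for P_Y-almost every y ∈ E, the restriction of κ_P y to G equals the restriction of P to G weighted by η(y,·): for every A ∈ G, (κ_P y)(A) = ∫_A η(y,ω) dP(ω). (This is the absolute continuity relationship P^y|_{F_t} = η_t^y · P|_{F_t} established in the proof of Proposition 10.) -/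
open MeasureTheory ProbabilityTheory

/-- `η : E × Ω → [0,∞)` is a disintegration of `Y` with respect to the sub-σ-algebra `G`. -/
def IsDisintegration {Ω E : Type*} (G : MeasurableSpace Ω)
    [mΩ : MeasurableSpace Ω] [MeasurableSpace E]
    (P : Measure Ω) (Y : Ω → E) (η : E → Ω → ℝ) : Prop :=
  Measurable (Function.uncurry η) ∧
  (∀ y ω, 0 ≤ η y ω) ∧
  (∀ y, Measurable[G] (η y)) ∧
  ∀ f : E → ℝ, Measurable f → (∃ C, ∀ y, |f y| ≤ C) →
    (fun ω => ∫ y, f y * η y ω ∂(P.map Y)) =ᵐ[P] P[(fun ω => f (Y ω)) | G]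

/-!
For `A ∈ G` and measurable `B ⊆ E`, both `y ↦ κP y A` and `y ↦ ∫_A η(y, ω) dP(ω)` have integral
`P (A ∩ Y ⁻¹' B)` over `B` with respect to the law of `Y`: the first by the definition of a
conditional distribution, the second by Tonelli's theorem and the identity
`∫_B η(y, ·) dP_Y(y) = P(Y ∈ B | G)`. Hence they agree for almost every `y`, with an exceptional set
depending on `A`. A countable algebra generating `G` makes this set uniform, since finite measures
agreeing on the algebra agree on `G`.
-/

lemma ae_forall_measurableSet_eq_of_forall_ae_eq {α Ω : Type*} [MeasurableSpace α]
    {G mΩ : MeasurableSpace Ω} (hG : G ≤ mΩ) (hGcg : @MeasurableSpace.CountablyGenerated Ω G)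
    {μ : Measure α} {κ ν : α → Measure Ω} [∀ a, IsFiniteMeasure (κ a)]
    (h : ∀ A, MeasurableSet[G] A → ∀ᵐ a ∂μ, κ a A = ν a A) :
    ∀ᵐ a ∂μ, ∀ A, MeasurableSet[G] A → κ a A = ν a A := by
  obtain ⟨S, hS_countable, hS_gen⟩ := hGcg.isCountablyGenerated
  have h_gen : G = MeasurableSpace.generateFrom (generateSetAlgebra S) := by
    rw [generateFrom_generateSetAlgebra_eq, hS_gen]
  have h_algebra : ∀ᵐ a ∂μ, ∀ A ∈ generateSetAlgebra S, κ a A = ν a A :=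
    (ae_ball_iff (countable_generateSetAlgebra hS_countable)).2 fun A hA =>
      h A (h_gen ▸ MeasurableSpace.measurableSet_generateFrom hA)
  filter_upwards [h_algebra] with a ha A hA
  exact ext_on_measurableSpace_of_generate_finite mΩ (generateSetAlgebra S) ha hG h_gen
    isSetAlgebra_generateSetAlgebra.isSetRing.isSetSemiring.isPiSystem
    (ha _ isSetAlgebra_generateSetAlgebra.univ_mem) hA

lemma exists_forall_abs_indicator_one_le {α : Type*} (s : Set α) :
    ∃ C, ∀ x, |s.indicator (1 : α → ℝ) x| ≤ C :=
  ⟨1, fun x => by simpa using norm_indicator_le_norm_self (1 : α → ℝ) x⟩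

lemma integral_indicator_one_mul {α : Type*} [MeasurableSpace α] {μ : Measure α} {s : Set α}
    (hs : NullMeasurableSet s μ) (f : α → ℝ) :
    ∫ x, s.indicator 1 x * f x ∂μ = ∫ x in s, f x ∂μ := by
  rw [← integral_indicator₀ hs]
  congr with x
  simp [← Set.indicator_mul_left]

namespace IsCondDistribGiven

variable {Ω E : Type*} [MeasurableSpace Ω] [MeasurableSpace E] {P : Measure Ω} {Y : Ω → E}
  {κ : Kernel E Ω} {A : Set Ω} {B : Set E}

lemma setIntegral_measureReal (hκ : IsCondDistribGiven P Y κ) (hY : AEMeasurable Y P)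
    (hA : MeasurableSet A) (hB : MeasurableSet B) :
    ∫ y in B, (κ y).real A ∂(P.map Y) = P.real (A ∩ Y ⁻¹' B) := by
  have h_inter : NullMeasurableSet (A ∩ Y ⁻¹' B) P :=
    hA.nullMeasurableSet.inter (hY.nullMeasurable hB)
  calc ∫ y in B, (κ y).real A ∂(P.map Y)
      = ∫ y, B.indicator 1 y * ∫ ω, A.indicator (1 : Ω → ℝ) ω ∂(κ y) ∂(P.map Y) := by
        simp_rw [integral_indicator_one hA, integral_indicator_one_mul hB.nullMeasurableSet]
    _ = ∫ ω, A.indicator 1 ω * B.indicator 1 (Y ω) ∂P :=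
        (hκ _ (measurable_one.indicator hA) (exists_forall_abs_indicator_one_le A)
          _ (measurable_one.indicator hB) (exists_forall_abs_indicator_one_le B)).symm
    _ = ∫ ω, (A ∩ Y ⁻¹' B).indicator 1 ω ∂P := by
        rw [Set.inter_indicator_one]; rfl
    _ = P.real (A ∩ Y ⁻¹' B) := by
        rw [integral_indicator₀ h_inter]; simp

lemma setLIntegral_measure [IsFiniteMeasure P] [IsFiniteKernel κ]
    (hκ : IsCondDistribGiven P Y κ) (hY : AEMeasurable Y P)
    (hA : MeasurableSet A) (hB : MeasurableSet B) :
    ∫⁻ y in B, κ y A ∂(P.map Y) = P (A ∩ Y ⁻¹' B) := by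
  have h_ne_top : ∫⁻ y in B, κ y A ∂(P.map Y) ≠ ⊤ := by
    rw [← Measure.compProd_apply_prod hB hA]
    exact measure_ne_top _ _
  rw [← ENNReal.toReal_eq_toReal_iff' h_ne_top (measure_ne_top _ _),
    ← integral_toReal (κ.measurable_coe hA).aemeasurable (.of_forall fun y => measure_lt_top _ _)]
  exact hκ.setIntegral_measureReal hY hA hB

end IsCondDistribGiven

namespace IsDisintegration

variable {Ω E : Type*} {G : MeasurableSpace Ω} [mΩ : MeasurableSpace Ω] [MeasurableSpace E]
  {P : Measure Ω} {Y : Ω → E} {η : E → Ω → ℝ} {A : Set Ω} {B : Set E}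

lemma ae_integrable [IsFiniteMeasure P] (hη : IsDisintegration G P Y η) (hG : G ≤ mΩ) :
    ∀ᵐ ω ∂P, Integrable (fun y => η y ω) (P.map Y) := by
  filter_upwards [hη.2.2.2 (fun _ => 1) measurable_const ⟨1, by simp⟩] with ω hω
  -- A non-integrable section would have Bochner integral `0` instead of `1`.
  by_contra h_not_int
  simp [integral_undef h_not_int, condExp_const hG] at hω

lemma setIntegral_ae_eq_condExp (hη : IsDisintegration G P Y η) (hB : MeasurableSet B) :
    (fun ω => ∫ y in B, η y ω ∂(P.map Y)) =ᵐ[P] P[(Y ⁻¹' B).indicator (1 : Ω → ℝ) | G] := by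
  have h_cond := hη.2.2.2 (B.indicator 1) (measurable_one.indicator hB)
    (exists_forall_abs_indicator_one_le B)
  simp_rw [integral_indicator_one_mul hB.nullMeasurableSet] at h_cond
  exact h_cond

lemma setLIntegral_ae_eq_condLExp [IsFiniteMeasure P] (hη : IsDisintegration G P Y η)
    (hG : G ≤ mΩ) (hY : AEMeasurable Y P) (hB : MeasurableSet B) :
    (fun ω => ∫⁻ y in B, ENNReal.ofReal (η y ω) ∂(P.map Y)) =ᵐ[P]
      P⁻[(Y ⁻¹' B).indicator 1 | G] := by
  have h_int : Integrable ((Y ⁻¹' B).indicator (1 : Ω → ℝ)) P :=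
    (integrable_const 1).indicator₀ (hY.nullMeasurable hB)
  have h_nonneg : 0 ≤ (Y ⁻¹' B).indicator (1 : Ω → ℝ) :=
    Set.indicator_nonneg fun _ _ => zero_le_one
  have h_ofReal : (fun ω => ENNReal.ofReal ((Y ⁻¹' B).indicator 1 ω)) = (Y ⁻¹' B).indicator 1 := by
    ext ω
    by_cases hω : ω ∈ Y ⁻¹' B <;> simp [hω]
  rw [← h_ofReal]
  filter_upwards [hη.ae_integrable hG, hη.setIntegral_ae_eq_condExp hB,
    condLExp_ofReal G h_int (.of_forall h_nonneg)] with ω hω_int hω_condExp hω_condLExp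
  rw [hω_condLExp, ← hω_condExp,
    ofReal_integral_eq_lintegral_ofReal hω_int.restrict (.of_forall fun y => hη.2.1 y ω)]

lemma setLIntegral_setLIntegral [IsFiniteMeasure P] (hη : IsDisintegration G P Y η)
    (hG : G ≤ mΩ) (hY : AEMeasurable Y P) (hA : MeasurableSet[G] A) (hB : MeasurableSet B) :
    ∫⁻ y in B, ∫⁻ ω in A, ENNReal.ofReal (η y ω) ∂P ∂(P.map Y) = P (A ∩ Y ⁻¹' B) :=
  calc ∫⁻ y in B, ∫⁻ ω in A, ENNReal.ofReal (η y ω) ∂P ∂(P.map Y)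
      = ∫⁻ ω in A, ∫⁻ y in B, ENNReal.ofReal (η y ω) ∂(P.map Y) ∂P :=
        lintegral_lintegral_swap hη.1.ennreal_ofReal.aemeasurable
    _ = ∫⁻ ω in A, P⁻[(Y ⁻¹' B).indicator 1 | G] ω ∂P :=
        lintegral_congr_ae (ae_restrict_of_ae (hη.setLIntegral_ae_eq_condLExp hG hY hB))
    _ = ∫⁻ ω in A, (Y ⁻¹' B).indicator 1 ω ∂P := setLIntegral_condLExp hG P _ hA
    _ = P (A ∩ Y ⁻¹' B) := by
        rw [lintegral_indicator_one₀ ((hY.mono_measure Measure.restrict_le_self).nullMeasurable hB),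
          Measure.restrict_apply' (hG A hA), Set.inter_comm]

end IsDisintegration

theorem condDistrib_restrict_eq_density_general {Ω E : Type*}
    (G : MeasurableSpace Ω)
    [mΩ : MeasurableSpace Ω] [MeasurableSpace E]
    (hG : G ≤ mΩ) (hGcg : @MeasurableSpace.CountablyGenerated Ω G)
    (P : Measure Ω) [IsFiniteMeasure P]
    (Y : Ω → E) (hY : AEMeasurable Y P)
    (η : E → Ω → ℝ) (hη : IsDisintegration G P Y η)
    (κP : Kernel E Ω) [IsFiniteKernel κP]
    (hκP : IsCondDistribGiven P Y κP) :
    ∀ᵐ y ∂(P.map Y), ∀ A : Set Ω, MeasurableSet[G] A →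
      κP y A = ∫⁻ ω in A, ENNReal.ofReal (η y ω) ∂P := by
  have h_fixed : ∀ A, MeasurableSet[G] A → ∀ᵐ y ∂(P.map Y),
      κP y A = P.withDensity (fun ω => ENNReal.ofReal (η y ω)) A := fun A hA => by
    simp_rw [withDensity_apply _ (hG A hA)]
    refine ae_eq_of_forall_setLIntegral_eq_of_sigmaFinite (κP.measurable_coe (hG A hA))
      hη.1.ennreal_ofReal.lintegral_prod_right' fun B hB _ => ?_
    rw [hκP.setLIntegral_measure hY (hG A hA) hB, hη.setLIntegral_setLIntegral hG hY hA hB]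
  filter_upwards [ae_forall_measurableSet_eq_of_forall_ae_eq hG hGcg h_fixed] with y hy A hA
  rw [hy A hA, withDensity_apply _ (hG A hA)]

theorem condDistrib_restrict_eq_density {Ω E : Type*}
    (G : MeasurableSpace Ω)
    [mΩ : MeasurableSpace Ω] [StandardBorelSpace Ω]
    [MeasurableSpace E] [StandardBorelSpace E]
    (hG : G ≤ mΩ) (hGcg : @MeasurableSpace.CountablyGenerated Ω G)
    (P : Measure Ω) [IsProbabilityMeasure P]
    (Y : Ω → E) (hY : Measurable Y)
    (η : E → Ω → ℝ) (hη : IsDisintegration G P Y η)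
    (κP : Kernel E Ω) [IsMarkovKernel κP]
    (hκP : IsCondDistribGiven P Y κP) :
    ∀ᵐ y ∂(P.map Y), ∀ A : Set Ω, MeasurableSet[G] A →
      κP y A = ∫⁻ ω in A, ENNReal.ofReal (η y ω) ∂P :=
  condDistrib_restrict_eq_density_general G hG hGcg P Y hY.aemeasurable η hη κP hκP
end

section
/- Let d ≥ 1, k > 0, let Ω : [0,∞) → (EuclideanSpace ℝ (Fin d) →L[ℝ] EuclideanSpace ℝ (Fin d)) be continuous and satisfy ⟪Ω_s x, x⟫ ≥ k‖x‖² for all s ≥ 0 and all x, and let Λ : [0,∞) → (EuclideanSpace ℝ (Fin d) →L[ℝ] EuclideanSpace ℝ (Fin d)) be continuous and satisfy the integral equation Λ_t = id − ∫₀ᵗ Λ_s ∘ Ω_s ds for all t ≥ 0 (composition of linear maps, Bochner integral). Then the operator norm of Λ_t satisfies ‖Λ_t‖ ≤ e^{−kt} for all t ≥ 0. (This is the Gronwall estimate ‖Λ_t‖ ≤ e^{−kt} derived from the curvature condition (5.2) in the proof of Corollary 15.) -/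
open MeasureTheory
open scoped InnerProductSpace

/-!
If `⟪A t x, x⟫ ≤ K ‖x‖²`, then every solution of `y' = A† y` satisfies
`(‖y‖²)' = 2 ⟪y, A† y⟫ = 2 ⟪A y, y⟫ ≤ 2 K ‖y‖²`, so `‖y‖` grows at most like `exp (K t)` by
Gronwall's inequality. The operator equation `Λ' = Λ A` has its coefficient on the right, so
this estimate does not apply to the orbits `Λ x`. It applies instead to the functionals `φ ∘ Λ`,
whose Riesz representatives solve `y' = A† y`; the Hahn–Banach theorem then recovers `‖Λ‖`.
-/

section Gronwall

open Set

variable {E F : Type*} [NormedAddCommGroup E] [InnerProductSpace ℝ E]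
  [NormedAddCommGroup F] [NormedSpace ℝ F] {K a b t : ℝ}

theorem norm_le_mul_exp_of_inner_deriv_right_le {y y' : ℝ → E} (hy : ContinuousOn y (Icc a b))
    (hy' : ∀ s ∈ Ico a b, HasDerivWithinAt y (y' s) (Ici s) s)
    (hK : ∀ s ∈ Ico a b, ⟪y s, y' s⟫_ℝ ≤ K * ‖y s‖ ^ 2) (ht : t ∈ Icc a b) :
    ‖y t‖ ≤ ‖y a‖ * Real.exp (K * (t - a)) := by
  have gronwall : ‖y t‖ ^ 2 ≤ gronwallBound (‖y a‖ ^ 2) (2 * K) 0 (t - a) :=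
    le_gronwallBound_of_liminf_deriv_right_le (hy.norm.pow 2)
      (fun s hs _ hr => (hy' s hs).norm_sq.liminf_right_slope_le hr) le_rfl
      (fun s hs => by simp only [Pi.pow_apply]; linarith [hK s hs]) t ht
  refine le_of_sq_le_sq ?_ (by positivity)
  calc ‖y t‖ ^ 2 ≤ ‖y a‖ ^ 2 * Real.exp (2 * K * (t - a)) := by
        rwa [gronwallBound_ε0] at gronwall
    _ = (‖y a‖ * Real.exp (K * (t - a))) ^ 2 := by
        rw [mul_pow, ← Real.exp_nat_mul, Nat.cast_ofNat, mul_assoc]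

variable [CompleteSpace E]

theorem dual_norm_le_mul_exp_of_hasDerivWithinAt_comp {φ : ℝ → StrongDual ℝ E}
    {A : ℝ → E →L[ℝ] E} (hφ : ContinuousOn φ (Icc a b))
    (hφ' : ∀ s ∈ Ico a b, HasDerivWithinAt φ (φ s ∘L A s) (Ici s) s)
    (hA : ∀ s ∈ Ico a b, ∀ x, ⟪A s x, x⟫_ℝ ≤ K * ‖x‖ ^ 2) (ht : t ∈ Icc a b) :
    ‖φ t‖ ≤ ‖φ a‖ * Real.exp (K * (t - a)) := by
  let riesz := (InnerProductSpace.toDual ℝ E).symm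
  have inner_riesz (ψ : StrongDual ℝ E) (x : E) : ⟪riesz ψ, x⟫_ℝ = ψ x :=
    InnerProductSpace.toDual_symm_apply
  have riesz_deriv : ∀ s ∈ Ico a b,
      HasDerivWithinAt (fun r => riesz (φ r)) (riesz (φ s ∘L A s)) (Ici s) s := fun s hs =>
    riesz.toContinuousLinearEquiv.hasFDerivAt.comp_hasDerivWithinAt s (hφ' s hs)
  have inner_riesz_deriv_le : ∀ s ∈ Ico a b,
      ⟪riesz (φ s), riesz (φ s ∘L A s)⟫_ℝ ≤ K * ‖riesz (φ s)‖ ^ 2 := fun s hs =>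
    calc ⟪riesz (φ s), riesz (φ s ∘L A s)⟫_ℝ
        = φ s (A s (riesz (φ s))) := by
          rw [real_inner_comm, inner_riesz, ContinuousLinearMap.comp_apply]
      _ = ⟪A s (riesz (φ s)), riesz (φ s)⟫_ℝ := by rw [real_inner_comm, inner_riesz]
      _ ≤ K * ‖riesz (φ s)‖ ^ 2 := hA s hs _
  simpa only [Function.comp_apply, riesz.norm_map] using norm_le_mul_exp_of_inner_deriv_right_le
    (riesz.continuous.comp_continuousOn hφ) riesz_deriv inner_riesz_deriv_le ht

theorem opNorm_le_mul_exp_of_hasDerivWithinAt_comp {Λ : ℝ → E →L[ℝ] F} {A : ℝ → E →L[ℝ] E}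
    (hΛ : ContinuousOn Λ (Icc a b))
    (hΛ' : ∀ s ∈ Ico a b, HasDerivWithinAt Λ (Λ s ∘L A s) (Ici s) s)
    (hA : ∀ s ∈ Ico a b, ∀ x, ⟪A s x, x⟫_ℝ ≤ K * ‖x‖ ^ 2) (ht : t ∈ Icc a b) :
    ‖Λ t‖ ≤ ‖Λ a‖ * Real.exp (K * (t - a)) := by
  refine (Λ t).opNorm_le_bound (by positivity) fun x =>
    NormedSpace.norm_le_dual_bound ℝ _ (by positivity) fun φ => ?_
  have functional_deriv : ∀ s ∈ Ico a b,
      HasDerivWithinAt (fun r => φ ∘L Λ r) ((φ ∘L Λ s) ∘L A s) (Ici s) s := fun s hs =>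
    (ContinuousLinearMap.compL ℝ E F ℝ φ).hasFDerivAt.comp_hasDerivWithinAt s (hΛ' s hs)
  have functional_bound : ‖φ ∘L Λ t‖ ≤ ‖φ‖ * ‖Λ a‖ * Real.exp (K * (t - a)) :=
    calc ‖φ ∘L Λ t‖ ≤ ‖φ ∘L Λ a‖ * Real.exp (K * (t - a)) :=
          dual_norm_le_mul_exp_of_hasDerivWithinAt_comp (φ := fun r => φ ∘L Λ r)
            (continuousOn_const.clm_comp hΛ) functional_deriv hA ht
      _ ≤ ‖φ‖ * ‖Λ a‖ * Real.exp (K * (t - a)) := by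
          gcongr
          exact φ.opNorm_comp_le (Λ a)
  calc ‖φ (Λ t x)‖ ≤ ‖φ ∘L Λ t‖ * ‖x‖ := (φ ∘L Λ t).le_opNorm x
    _ ≤ ‖φ‖ * ‖Λ a‖ * Real.exp (K * (t - a)) * ‖x‖ := by gcongr
    _ = ‖Λ a‖ * Real.exp (K * (t - a)) * ‖x‖ * ‖φ‖ := by ring

end Gronwall

section IntegralEquation

open Set

variable {F : Type*} [NormedAddCommGroup F] [NormedSpace ℝ F] [CompleteSpace F]

theorem hasDerivWithinAt_Ici_integral_of_continuousOn {f : ℝ → F} {a t : ℝ}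
    (hf : ContinuousOn f (Ici a)) (ht : a ≤ t) :
    HasDerivWithinAt (fun u => ∫ s in a..u, f s) (f t) (Ici t) t := by
  have hf_right : ContinuousOn f (Ioi t) := hf.mono fun _ hs => ht.trans (le_of_lt hs)
  exact intervalIntegral.integral_hasDerivWithinAt_right
    (hf.mono (uIcc_of_le ht ▸ Icc_subset_Ici_self)).intervalIntegrable
    ⟨Ioi t, self_mem_nhdsWithin, hf_right.aestronglyMeasurable measurableSet_Ioi⟩
    ((hf t ht).mono fun _ hs => ht.trans (le_of_lt hs))

variable {E : Type*} [NormedAddCommGroup E] [InnerProductSpace ℝ E] [CompleteSpace E]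

theorem resolvent_norm_decay_general {k : ℝ} {A : ℝ → E →L[ℝ] E} {C : E →L[ℝ] F}
    {Λ : ℝ → E →L[ℝ] F} (hA : ContinuousOn A (Ici 0))
    (hA_ge : ∀ s, 0 ≤ s → ∀ x, k * ‖x‖ ^ 2 ≤ ⟪A s x, x⟫_ℝ)
    (hΛ : ContinuousOn Λ (Ici 0))
    (hΛ_eq : ∀ t, 0 ≤ t → Λ t = C - ∫ s in (0 : ℝ)..t, Λ s ∘L A s) {t : ℝ} (ht : 0 ≤ t) :
    ‖Λ t‖ ≤ ‖C‖ * Real.exp (-k * t) := by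
  have Λ_zero : Λ 0 = C := by
    rw [hΛ_eq 0 le_rfl, intervalIntegral.integral_same, sub_zero]
  have deriv_right : ∀ s ∈ Ico 0 t, HasDerivWithinAt Λ (Λ s ∘L (-A s)) (Ici s) s := by
    intro s hs
    rw [ContinuousLinearMap.comp_neg]
    exact ((hasDerivWithinAt_Ici_integral_of_continuousOn (hΛ.clm_comp hA) hs.1).const_sub
      C).congr (fun r hr => hΛ_eq r (hs.1.trans hr)) (hΛ_eq s hs.1)
  have inner_neg_le : ∀ s ∈ Ico 0 t, ∀ x, ⟪(-A s) x, x⟫_ℝ ≤ -k * ‖x‖ ^ 2 := by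
    intro s hs x
    rw [neg_apply, inner_neg_left, neg_mul]
    exact neg_le_neg (hA_ge s hs.1 x)
  simpa only [Λ_zero, sub_zero] using opNorm_le_mul_exp_of_hasDerivWithinAt_comp
    (hΛ.mono Icc_subset_Ici_self) deriv_right inner_neg_le (right_mem_Icc.2 ht)

end IntegralEquation

theorem resolvent_norm_decay (d : ℕ) (hd : 1 ≤ d) (k : ℝ) (hk : 0 < k)
    (A : ℝ → (EuclideanSpace ℝ (Fin d) →L[ℝ] EuclideanSpace ℝ (Fin d)))
    (hAcont : ContinuousOn A (Set.Ici (0 : ℝ)))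
    (hApos : ∀ s : ℝ, 0 ≤ s → ∀ x : EuclideanSpace ℝ (Fin d),
      k * ‖x‖ ^ 2 ≤ ⟪A s x, x⟫_ℝ)
    (Λ : ℝ → (EuclideanSpace ℝ (Fin d) →L[ℝ] EuclideanSpace ℝ (Fin d)))
    (hΛcont : ContinuousOn Λ (Set.Ici (0 : ℝ)))
    (hΛ : ∀ t : ℝ, 0 ≤ t →
      Λ t = ContinuousLinearMap.id ℝ (EuclideanSpace ℝ (Fin d))
        - ∫ s in (0 : ℝ)..t, (Λ s).comp (A s)) :
    ∀ t : ℝ, 0 ≤ t → ‖Λ t‖ ≤ Real.exp (-k * t) := fun _ ht =>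
  (resolvent_norm_decay_general hAcont hApos hΛcont hΛ ht).trans
    (mul_le_of_le_one_left (Real.exp_pos _).le ContinuousLinearMap.norm_id_le)
end
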